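/- For every real ρ with 0 ≤ ρ ≤ 1 and every T > 0 there exists a constant C > 0, depending only on ρ and T, such that for all real λ ≥ 0 and all 0 ≤ t₁ ≤ t₂ ≤ T one has (1 + λ)^ρ · ∫_{t₁}^{t₂} exp(−λ(t₂ − s)) ds ≤ C · (t₂ − t₁)^(1−ρ). -/

import Mathlib

/-!
Write `J` for the integral and `τ = t₂ - t₁`. The integrand is at most `1`, so `J ≤ τ`, while
integrating exactly gives `lam * J = 1 - exp (-(lam * τ)) ≤ 1`; hence `(1 + lam) * J ≤ 1 + τ`.
The factorization `(1 + lam) ^ ρ * J = ((1 + lam) * J) ^ ρ * J ^ (1 - ρ)` interpolates between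
these two bounds.
-/

lemma rpow_mul_eq_mul_rpow_mul_rpow_one_sub {a x : ℝ} (ha : 0 ≤ a) (hx : 0 ≤ x) (ρ : ℝ) :
    a ^ ρ * x = (a * x) ^ ρ * x ^ (1 - ρ) := by
  have hx_split : x ^ ρ * x ^ (1 - ρ) = x := by
    rw [← Real.rpow_add' hx (by norm_num), add_sub_cancel, Real.rpow_one]
  rw [Real.mul_rpow ha hx, mul_assoc, hx_split]

lemma rpow_mul_le_rpow_mul_rpow_one_sub {a x K L ρ : ℝ} (ha : 0 ≤ a) (hx : 0 ≤ x)
    (hρ0 : 0 ≤ ρ) (hρ1 : ρ ≤ 1) (haxK : a * x ≤ K) (hxL : x ≤ L) :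
    a ^ ρ * x ≤ K ^ ρ * L ^ (1 - ρ) := by
  have hK : 0 ≤ K := (mul_nonneg ha hx).trans haxK
  rw [rpow_mul_eq_mul_rpow_mul_rpow_one_sub ha hx]
  gcongr

lemma mul_integral_exp_neg_mul_sub (lam t₁ t₂ : ℝ) :
    lam * ∫ s in t₁..t₂, Real.exp (-(lam * (t₂ - s))) = 1 - Real.exp (-(lam * (t₂ - t₁))) := by
  simp only [mul_sub, neg_sub, intervalIntegral.mul_integral_comp_mul_sub, integral_exp, sub_self,
    Real.exp_zero]

lemma integral_exp_neg_mul_sub_le {lam t₁ t₂ : ℝ} (hlam : 0 ≤ lam) (h12 : t₁ ≤ t₂) :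
    ∫ s in t₁..t₂, Real.exp (-(lam * (t₂ - s))) ≤ t₂ - t₁ := by
  have hexp_le_one : ∀ s ∈ Set.Icc t₁ t₂, Real.exp (-(lam * (t₂ - s))) ≤ 1 := fun s hs =>
    Real.exp_le_one_iff.mpr (neg_nonpos.mpr (mul_nonneg hlam (sub_nonneg.mpr hs.2)))
  calc ∫ s in t₁..t₂, Real.exp (-(lam * (t₂ - s)))
      ≤ ∫ _ in t₁..t₂, (1 : ℝ) :=
        intervalIntegral.integral_mono_on h12
          (Continuous.intervalIntegrable (by fun_prop) _ _) intervalIntegrable_const hexp_le_one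
    _ = t₂ - t₁ := integral_one

theorem scalar_time_averaged_semigroup_general {ρ lam t₁ t₂ : ℝ} (hρ0 : 0 ≤ ρ) (hρ1 : ρ ≤ 1)
    (hlam : 0 ≤ lam) (h12 : t₁ ≤ t₂) :
    (1 + lam) ^ ρ * (∫ s in t₁..t₂, Real.exp (-(lam * (t₂ - s))))
      ≤ (1 + (t₂ - t₁)) ^ ρ * (t₂ - t₁) ^ (1 - ρ) := by
  have hJ_nonneg : 0 ≤ ∫ s in t₁..t₂, Real.exp (-(lam * (t₂ - s))) :=
    intervalIntegral.integral_nonneg h12 fun s _ => (Real.exp_pos _).le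
  have hJ_le := integral_exp_neg_mul_sub_le hlam h12
  have hmulJ_le : (1 + lam) * (∫ s in t₁..t₂, Real.exp (-(lam * (t₂ - s)))) ≤ 1 + (t₂ - t₁) := by
    rw [add_mul, one_mul, mul_integral_exp_neg_mul_sub]
    linarith [Real.exp_pos (-(lam * (t₂ - t₁)))]
  exact rpow_mul_le_rpow_mul_rpow_one_sub (by positivity) hJ_nonneg hρ0 hρ1 hmulJ_le hJ_le

/-- Scalar spectral content of the time-averaged semigroup estimate
`‖(I+A)^ρ ∫_{t₁}^{t₂} E(t₂−s)v ds‖ ≲ (t₂−t₁)^{1−ρ}‖v‖` (Lemma 3.4, estimate (3.23)). -/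
theorem scalar_time_averaged_semigroup (ρ T : ℝ) (hρ0 : 0 ≤ ρ) (hρ1 : ρ ≤ 1) (hT : 0 < T) :
    ∃ C : ℝ, 0 < C ∧ ∀ lam t₁ t₂ : ℝ, 0 ≤ lam → 0 ≤ t₁ → t₁ ≤ t₂ → t₂ ≤ T →
      (1 + lam) ^ ρ * (∫ s in t₁..t₂, Real.exp (-(lam * (t₂ - s))))
        ≤ C * (t₂ - t₁) ^ (1 - ρ) :=
  ⟨(1 + T) ^ ρ, by positivity, fun lam t₁ t₂ hlam h1 h12 h2 =>
    (scalar_time_averaged_semigroup_general hρ0 hρ1 hlam h12).trans (by gcongr; linarith)⟩
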